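/- Let t ≥ 2 be an integer and let t₀ be the largest integer with 2^{t₀} < t. Then for all sufficiently large n, ex({M(K_t)}, n) = 2ⁿ(1 − 2^{−t₀}) + 2^{t − 2^{t₀} − 1} − 1, where K_t is the complete graph on t vertices. -/

import Mathlib

open scoped Classical

/-- `M` has an `N`-restriction: some injective linear image of `N` lies inside `M`. -/
def HasRestriction {α β : Type*} [AddCommMonoid α] [AddCommMonoid β]
    [Module (ZMod 2) α] [Module (ZMod 2) β] (N : Set α) (M : Set β) : Prop :=
  ∃ ψ : α →ₗ[ZMod 2] β, Function.Injective ψ ∧ ψ '' N ⊆ M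

/-- The set of distinct `N`-restrictions of `M` (as subsets of `M`). -/
def restrictionSet {α β : Type*} [AddCommMonoid α] [AddCommMonoid β]
    [Module (ZMod 2) α] [Module (ZMod 2) β] (N : Set α) (M : Set β) : Set (Set β) :=
  {S | S ⊆ M ∧ ∃ ψ : α →ₗ[ZMod 2] β, Function.Injective ψ ∧ S = ψ '' N}

/-- The Turán number for a single excluded matroid `N`. -/
noncomputable def exNum {α : Type*} [AddCommMonoid α] [Module (ZMod 2) α] (N : Set α) (n : ℕ) : ℕ :=
  sSup {m | ∃ M : Set (Fin n → ZMod 2), 0 ∉ M ∧ ¬ HasRestriction N M ∧ M.ncard = m}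

/-- The Turán number for a family of excluded matroids. -/
noncomputable def exNumFam (𝒩 : Set (Σ k : ℕ, Set (Fin k → ZMod 2))) (n : ℕ) : ℕ :=
  sSup {m | ∃ M : Set (Fin n → ZMod 2), 0 ∉ M ∧
    (∀ N ∈ 𝒩, ¬ HasRestriction N.2 M) ∧ M.ncard = m}

/-- The critical number of `M ⊆ 𝔽₂ⁿ`. -/
noncomputable def critNum {n : ℕ} (M : Set (Fin n → ZMod 2)) : ℕ :=
  sInf {c | ∃ φ : (Fin n → ZMod 2) →ₗ[ZMod 2] (Fin c → ZMod 2), ∀ x ∈ M, φ x ≠ 0}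

/-- The rank of `M`: dimension of its span. -/
noncomputable def rankM {n : ℕ} (M : Set (Fin n → ZMod 2)) : ℕ :=
  Module.finrank (ZMod 2) (Submodule.span (ZMod 2) M)

/-- `M` is a copy of `N^{n,t}`. -/
def IsCopyNnt {d : ℕ} (N : Set (Fin d → ZMod 2)) (n t : ℕ)
    (M : Set (Fin n → ZMod 2)) : Prop :=
  ∃ F : Submodule (ZMod 2) (Fin n → ZMod 2), Module.finrank (ZMod 2) F = n - t ∧
    ∃ θ : (Fin d → ZMod 2) →ₗ[ZMod 2] (Fin n → ZMod 2),
      Function.Injective θ ∧ (∀ x, θ x ∈ F) ∧ M = θ '' N ∪ {x | x ∉ F}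

/-- The decomposition family `𝒟(𝒩)`. -/
def decompFam (𝒩 : Set (Σ k : ℕ, Set (Fin k → ZMod 2))) (k : ℕ) :
    Set (Σ k : ℕ, Set (Fin k → ZMod 2)) :=
  {D | 0 ∉ D.2 ∧
    (∃ N ∈ 𝒩, ∃ M : Set (Fin N.1 → ZMod 2), IsCopyNnt D.2 N.1 k M ∧ HasRestriction N.2 M) ∧
    ∀ D' : Σ k : ℕ, Set (Fin k → ZMod 2), 0 ∉ D'.2 →
      (∃ N ∈ 𝒩, ∃ M : Set (Fin N.1 → ZMod 2), IsCopyNnt D'.2 N.1 k M ∧ HasRestriction N.2 M) →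
      HasRestriction D'.2 D.2 → HasRestriction D.2 D'.2}

/-- The cycle matroid of a simple graph. -/
def cycleMatroid {V : Type*} [DecidableEq V] (G : SimpleGraph V) : Set (V → ZMod 2) :=
  {x | ∃ u v, G.Adj u v ∧ x = Pi.single u 1 + Pi.single v 1}


open Finset in
noncomputable def rhoC {V : Type} [AddCommGroup V] (A : Finset V) (f : V) : ℕ := #{a ∈ A | a + f ∈ A}

set_option linter.unusedSectionVars false

section aux
variable {V : Type} [AddCommGroup V] [Module (ZMod 2) V]

theorem aux_self (x : V) : x + x = 0 := ZModModule.add_self x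

theorem aux_cancel (x y : V) : x + y + y = x := by
  rw [add_assoc, aux_self, add_zero]

theorem aux_zmod (c : ZMod 2) : c = 0 ∨ c = 1 := by
  revert c; decide

theorem aux_card [Fintype V] : Fintype.card V = 2 ^ Module.finrank (ZMod 2) V := by
  have := Module.card_eq_pow_finrank (K := ZMod 2) (V := V)
  rwa [ZMod.card] at this

theorem sum_rho [Fintype V] (A : Finset V) : ∑ f : V, rhoC A f = A.card ^ 2 := by
  have h := Finset.card_eq_sum_card_fiberwise (f := fun p : V × V => p.1 + p.2) (s := A ×ˢ A)
    (t := Finset.univ) (by intro x _; simp)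
  rw [Finset.card_product, ← sq] at h
  rw [h]
  refine Finset.sum_congr rfl fun f _ => ?_
  unfold rhoC
  refine Finset.card_bij (fun a _ => (a, a + f)) ?_ ?_ ?_
  · intro a ha
    simp only [Finset.mem_filter, Finset.mem_product] at ha ⊢
    refine ⟨ha, ?_⟩
    rw [← add_assoc, aux_self, zero_add]
  · intro a _ b _ hab
    exact (Prod.ext_iff.1 hab).1
  · rintro ⟨a, b⟩ hb
    simp only [Finset.mem_filter, Finset.mem_product] at hb
    obtain ⟨⟨ha, hb⟩, rfl⟩ := hb
    have : a + (a + b) = b := by rw [← add_assoc, aux_self, zero_add]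
    refine ⟨a, ?_, ?_⟩
    · simp [ha, this, hb]
    · simp [this]

theorem rho_zero (A : Finset V) : rhoC A 0 = A.card := by
  simp [rhoC]

theorem rho_le (A : Finset V) (f : V) : rhoC A f ≤ A.card := Finset.card_filter_le _ _

theorem popular [Fintype V] (K : ℕ) (A : Finset V) (hA : 2 ^ Module.finrank (ZMod 2) V ≤ K * A.card)
    (hK : 2 * K < 2 ^ Module.finrank (ZMod 2) V) :
    ∃ f : V, f ≠ 0 ∧ 2 ^ Module.finrank (ZMod 2) V ≤ (2 * K ^ 2) * rhoC A f := by
  by_contra! hcon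
  set N := 2 ^ Module.finrank (ZMod 2) V with hN
  have hs := sum_rho A
  rw [← Finset.add_sum_erase _ _ (Finset.mem_univ (0 : V)), rho_zero] at hs
  have h1 : (2 * K ^ 2) * ∑ f ∈ Finset.univ.erase (0 : V), rhoC A f ≤ N * N := by
    rw [Finset.mul_sum]
    calc _ ≤ ∑ f ∈ Finset.univ.erase (0 : V), N :=
          Finset.sum_le_sum fun f hf => (hcon f (Finset.ne_of_mem_erase hf)).le
      _ ≤ ∑ f : V, N := Finset.sum_le_sum_of_subset (Finset.erase_subset _ _)
      _ = N * N := by simp [aux_card, hN]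
  have hA2 : 2 < A.card := by
    by_contra! h
    have : K * A.card ≤ K * 2 := Nat.mul_le_mul_left _ h
    omega
  have hKpos : 0 < K := by
    rcases Nat.eq_zero_or_pos K with h | h
    · subst h; have : 0 < N := by positivity
      omega
    · exact h
  have h2 : N * N ≤ (K * A.card) * (K * A.card) := Nat.mul_le_mul hA hA
  have h3 : 2 * K ^ 2 * A.card ^ 2 ≤ 2 * K ^ 2 * A.card + N * N := by
    rw [← hs, mul_add]; omega
  have h4 : K ^ 2 * A.card * A.card ≤ K ^ 2 * A.card * 2 := by nlinarith
  have h5 : 0 < K ^ 2 * A.card := by positivity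
  have := Nat.le_of_mul_le_mul_left h4 h5
  omega

end aux

theorem hilbert (m : ℕ) : ∀ K : ℕ, ∃ d : ℕ, ∀ (E : Type) [AddCommGroup E] [Module (ZMod 2) E]
    [Fintype E] (A : Finset E), d ≤ Module.finrank (ZMod 2) E →
    2 ^ Module.finrank (ZMod 2) E ≤ K * A.card →
    ∃ (y : E) (W : Submodule (ZMod 2) E), Module.finrank (ZMod 2) W = m ∧ ∀ w ∈ W, y + w ∈ A := by
  induction m with
  | zero =>
    intro K
    refine ⟨0, fun E _ _ _ A _ hA => ?_⟩
    have : A.Nonempty := by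
      rw [← Finset.card_pos]
      rcases Nat.eq_zero_or_pos A.card with h | h
      · rw [h] at hA; have : 0 < 2 ^ Module.finrank (ZMod 2) E := by positivity
        omega
      · exact h
    obtain ⟨y, hy⟩ := this
    refine ⟨y, ⊥, by simp, ?_⟩
    intro w hw
    rw [Submodule.mem_bot] at hw
    simpa [hw] using hy
  | succ m ih =>
    intro K
    obtain ⟨d, hd⟩ := ih (2 * K ^ 2)
    refine ⟨d + 1 + (2 * K), fun E _ _ _ A hdim hA => ?_⟩
    have hK : 2 * K < 2 ^ Module.finrank (ZMod 2) E :=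
      lt_of_lt_of_le Nat.lt_two_pow_self (Nat.pow_le_pow_right (by norm_num) (by omega))
    obtain ⟨f, hf0, hf⟩ := popular K A hA hK
    obtain ⟨H, hH⟩ := Submodule.exists_isCompl (Submodule.span (ZMod 2) {f})
    have hfin : 1 + Module.finrank (ZMod 2) H = Module.finrank (ZMod 2) E := by
      have := Submodule.finrank_add_eq_of_isCompl hH
      rwa [finrank_span_singleton hf0] at this
    have hfH : f ∉ H := fun h => hf0 (by
      have := hH.disjoint
      rw [Submodule.disjoint_def] at this
      exact this f (Submodule.mem_span_singleton_self f) h)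
    have hdec : ∀ e : E, e ∈ H ∨ e + f ∈ H := by
      intro e
      have : e ∈ Submodule.span (ZMod 2) {f} ⊔ H := by rw [hH.sup_eq_top]; trivial
      obtain ⟨a, ha, b, hb, rfl⟩ := Submodule.mem_sup.1 this
      obtain ⟨c, rfl⟩ := Submodule.mem_span_singleton.1 ha
      rcases aux_zmod c with rfl | rfl
      · left; simpa using hb
      · right
        have : (1 : ZMod 2) • f + b + f = b := by
          rw [one_smul, add_comm f b, aux_cancel]
        rwa [this]
    let A' : Finset H := Finset.univ.filter (fun h : H => (h : E) ∈ A ∧ (h : E) + f ∈ A)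
    have hcard : rhoC A f ≤ 2 * A'.card := by
      have hsub : (A.filter fun a => a + f ∈ A) ⊆
          A'.image (fun h : H => (h : E)) ∪ A'.image (fun h : H => (h : E) + f) := by
        intro a ha
        rw [Finset.mem_filter] at ha
        rw [Finset.mem_union, Finset.mem_image, Finset.mem_image]
        rcases hdec a with h | h
        · left; exact ⟨⟨a, h⟩, by simp [A', ha.1, ha.2], rfl⟩
        · right
          refine ⟨⟨a + f, h⟩, ?_, aux_cancel a f⟩
          simp [A', ha.2, aux_cancel, ha.1]
      calc rhoC A f ≤ _ := Finset.card_le_card hsub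
        _ ≤ _ := Finset.card_union_le _ _
        _ ≤ A'.card + A'.card := Nat.add_le_add Finset.card_image_le Finset.card_image_le
        _ = _ := by ring
    have hdens : 2 ^ Module.finrank (ZMod 2) H ≤ (2 * K ^ 2) * A'.card := by
      rw [← hfin, pow_add, pow_one] at hf
      have : 2 * K ^ 2 * rhoC A f ≤ 2 * K ^ 2 * (2 * A'.card) := Nat.mul_le_mul_left _ hcard
      have h2 : 2 * K ^ 2 * (2 * A'.card) = 2 * (2 * K ^ 2 * A'.card) := by ring
      omega
    obtain ⟨y, W, hW, hyW⟩ := hd H A' (by omega) hdens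
    refine ⟨y, W.map H.subtype ⊔ Submodule.span (ZMod 2) {f}, ?_, ?_⟩
    · have hdis : W.map H.subtype ⊓ Submodule.span (ZMod 2) {f} = ⊥ := by
        refine disjoint_iff.1 (hH.disjoint.symm.mono_left ?_)
        exact Submodule.map_subtype_le _ _
      have := Submodule.finrank_sup_add_finrank_inf_eq (W.map H.subtype) (Submodule.span (ZMod 2) {f})
      rw [hdis, finrank_bot, finrank_span_singleton hf0, Submodule.finrank_map_subtype_eq, hW] at this
      simpa using this
    · intro w hw
      obtain ⟨a, ha, b, hb, rfl⟩ := Submodule.mem_sup.1 hw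
      obtain ⟨c, rfl⟩ := Submodule.mem_span_singleton.1 hb
      obtain ⟨a', ha', rfl⟩ := Submodule.mem_map.1 ha
      have h := hyW a' ha'
      simp only [A', Finset.mem_filter, Finset.mem_univ, true_and] at h
      rcases aux_zmod c with rfl | rfl
      · simpa using h.1
      · simpa [add_assoc] using h.2


theorem coset_avg {V : Type} [AddCommGroup V] [Module (ZMod 2) V] [Fintype V]
    (F : Submodule (ZMod 2) V) (K : ℕ) (A : Finset V)
    (hA : 2 ^ Module.finrank (ZMod 2) V ≤ K * A.card) :
    ∃ a : V, 2 ^ Module.finrank (ZMod 2) F ≤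
      K * (Finset.univ.filter (fun f : F => a + (f : V) ∈ A)).card := by
  by_contra! hcon
  have h1 : ∑ a : V, (Finset.univ.filter (fun f : F => a + (f : V) ∈ A)).card
      = Fintype.card F * A.card := by
    simp_rw [Finset.card_filter]
    rw [Finset.sum_comm]
    have : ∀ f : F, (∑ a : V, if a + (f : V) ∈ A then 1 else 0) = A.card := by
      intro f
      rw [Fintype.sum_equiv (Equiv.addRight (f : V)) _ (fun a => if a ∈ A then 1 else 0)
        (fun a => by by_cases h : a + (f : V) ∈ A <;> simp [h])]
      simp
    rw [Finset.sum_congr rfl fun f _ => this f]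
    simp
  have h2 : K * ∑ a : V, (Finset.univ.filter (fun f : F => a + (f : V) ∈ A)).card
      < ∑ a : V, 2 ^ Module.finrank (ZMod 2) F := by
    rw [Finset.mul_sum]
    exact Finset.sum_lt_sum_of_nonempty ⟨0, Finset.mem_univ _⟩ fun a _ => hcon a
  rw [h1, Finset.sum_const, Finset.card_univ, aux_card, aux_card, smul_eq_mul] at h2
  have h3 := Nat.mul_le_mul_right (2 ^ Module.finrank (ZMod 2) F) hA
  have h4 : K * A.card * 2 ^ Module.finrank (ZMod 2) F
    = K * (2 ^ Module.finrank (ZMod 2) F * A.card) := by ring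
  omega

noncomputable def extA {V : Type} [AddCommGroup V] [Module (ZMod 2) V] [Fintype V]
    (M : Finset V) (X : Submodule (ZMod 2) V) : Finset V :=
  Finset.univ.filter (fun a : V => ∀ x ∈ X, a + x ∈ M)

def BB {V : Type} [AddCommGroup V] [Module (ZMod 2) V] (M : Finset V)
    (X F : Submodule (ZMod 2) V) : Prop := ∀ x ∈ X, x ≠ 0 → ∀ f ∈ F, x + f ∈ M

theorem bb_step (m K : ℕ) : ∃ d : ℕ, ∀ (V : Type) [AddCommGroup V] [Module (ZMod 2) V]
    [Fintype V] (M : Finset V) (X F : Submodule (ZMod 2) V), 0 ∉ M → d ≤ Module.finrank (ZMod 2) F →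
    BB M X F → 2 ^ Module.finrank (ZMod 2) V ≤ K * (extA M X).card →
    ∃ X' F' : Submodule (ZMod 2) V, X ≤ X' ∧
      Module.finrank (ZMod 2) X' = Module.finrank (ZMod 2) X + 1 ∧
      Module.finrank (ZMod 2) F' = m ∧ BB M X' F' := by
  obtain ⟨d, hd⟩ := hilbert m K
  refine ⟨d, fun V _ _ _ M X F h0 hdF hBB hA => ?_⟩
  obtain ⟨a, ha⟩ := coset_avg F K _ hA
  obtain ⟨y, W, hW, hyW⟩ := hd F _ hdF ha
  have key : ∀ w ∈ W, ∀ x ∈ X, a + ((y : V) + (w : V)) + x ∈ M := by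
    intro w hw x hx
    have := hyW w hw
    simp only [extA, Finset.mem_filter, Finset.mem_univ, true_and] at this
    exact this x hx
  have hz : a + (y : V) ∉ X := by
    intro h
    have := key 0 W.zero_mem _ h
    simp [aux_self] at this
    exact h0 this
  refine ⟨X ⊔ Submodule.span (ZMod 2) {a + (y : V)}, W.map F.subtype, le_sup_left, ?_, ?_, ?_⟩
  · have hne : a + (y : V) ≠ 0 := fun h => hz (h ▸ X.zero_mem)
    have hdis : X ⊓ Submodule.span (ZMod 2) {a + (y : V)} = ⊥ := by
      rw [← disjoint_iff, Submodule.disjoint_def]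
      intro x hx hx'
      obtain ⟨c, rfl⟩ := Submodule.mem_span_singleton.1 hx'
      rcases aux_zmod c with rfl | rfl
      · simp
      · exact absurd (by simpa using hx) hz
    have := Submodule.finrank_sup_add_finrank_inf_eq X (Submodule.span (ZMod 2) {a + (y : V)})
    rw [hdis, finrank_bot, finrank_span_singleton hne] at this
    simpa using this
  · rw [Submodule.finrank_map_subtype_eq, hW]
  · intro z hz' hz0 f hf
    obtain ⟨w, hw, rfl⟩ := Submodule.mem_map.1 hf
    obtain ⟨x, hx, b, hb, rfl⟩ := Submodule.mem_sup.1 hz'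
    obtain ⟨c, rfl⟩ := Submodule.mem_span_singleton.1 hb
    rcases aux_zmod c with rfl | rfl
    · simp only [zero_smul, add_zero] at hz0 ⊢
      exact hBB x hx hz0 _ w.2
    · have := key w hw x hx
      have e : x + (1 : ZMod 2) • (a + (y : V)) + F.subtype w = a + ((y : V) + (w : V)) + x := by
        rw [one_smul, Submodule.subtype_apply]; abel
      rw [e]; exact this

/-- Lower bound for the extension set, with gain from the overlap. -/
theorem extA_card {V : Type} [AddCommGroup V] [Module (ZMod 2) V] [Fintype V]
    (M : Finset V) (X : Submodule (ZMod 2) V) :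
    2 ^ Module.finrank (ZMod 2) V ≤
      (extA M X).card + 2 ^ Module.finrank (ZMod 2) X * Mᶜ.card := by
  have hsub : (Finset.univ : Finset V) ⊆ extA M X ∪
      (Finset.univ : Finset X).biUnion (fun x => Mᶜ.image (fun a => a + (x : V))) := by
    intro a _
    rw [Finset.mem_union, Finset.mem_biUnion]
    by_cases h : a ∈ extA M X
    · exact Or.inl h
    · right
      simp only [extA, Finset.mem_filter, Finset.mem_univ, true_and, not_forall] at h
      obtain ⟨x, hx, hax⟩ := h
      exact ⟨⟨x, hx⟩, Finset.mem_univ _, Finset.mem_image.2 ⟨a + x, by simpa using hax, aux_cancel a x⟩⟩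
  have h := (Finset.card_le_card hsub).trans (Finset.card_union_le _ _)
  rw [Finset.card_univ, aux_card] at h
  refine h.trans (Nat.add_le_add_left ?_ _)
  refine (Finset.card_biUnion_le_card_mul _ _ Mᶜ.card fun x _ => Finset.card_image_le).trans ?_
  rw [Finset.card_univ, aux_card]

theorem extA_card' {V : Type} [AddCommGroup V] [Module (ZMod 2) V] [Fintype V]
    (M : Finset V) (X : Submodule (ZMod 2) V) (w : V) (hw : w ∈ X) (hw0 : w ≠ 0) :
    2 ^ Module.finrank (ZMod 2) V + rhoC Mᶜ w ≤
      (extA M X).card + 2 ^ Module.finrank (ZMod 2) X * Mᶜ.card := by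
  have hsub : (Finset.univ : Finset V) ⊆ extA M X ∪ ((Mᶜ.filter (fun a => a + w ∉ Mᶜ)) ∪
      ((Finset.univ : Finset X).erase 0).biUnion (fun x => Mᶜ.image (fun a => a + (x : V)))) := by
    intro a _
    rw [Finset.mem_union, Finset.mem_union, Finset.mem_biUnion]
    by_cases h : a ∈ extA M X
    · exact Or.inl h
    · right
      by_cases h2 : ∃ x ∈ X, x ≠ 0 ∧ a + x ∉ M
      · obtain ⟨x, hx, hx0, hax⟩ := h2
        right
        exact ⟨⟨x, hx⟩, by simpa using hx0,
          Finset.mem_image.2 ⟨a + x, by simpa using hax, aux_cancel a x⟩⟩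
      · left
        push Not at h2
        simp only [extA, Finset.mem_filter, Finset.mem_univ, true_and, not_forall] at h
        obtain ⟨x, hx, hax⟩ := h
        have hx0 : x = 0 := by
          by_contra hne
          exact hax (h2 x hx hne)
        subst hx0
        simp only [Finset.mem_filter, Finset.mem_compl, not_not]
        exact ⟨by simpa using hax, h2 w hw hw0⟩
  have h := (Finset.card_le_card hsub).trans ((Finset.card_union_le _ _).trans
    (Nat.add_le_add_left (Finset.card_union_le _ _) _))
  rw [Finset.card_univ, aux_card] at h
  have h2 : (((Finset.univ : Finset X).erase 0).biUnion
      (fun x => Mᶜ.image (fun a => a + (x : V)))).card ≤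
      (2 ^ Module.finrank (ZMod 2) X - 1) * Mᶜ.card := by
    refine (Finset.card_biUnion_le_card_mul _ _ Mᶜ.card fun x _ => Finset.card_image_le).trans ?_
    rw [Finset.card_erase_of_mem (Finset.mem_univ _), Finset.card_univ, aux_card]
  have h3 : rhoC Mᶜ w + (Mᶜ.filter (fun a => a + w ∉ Mᶜ)).card = Mᶜ.card :=
    Finset.card_filter_add_card_filter_not _
  have h4 : 2 ^ Module.finrank (ZMod 2) X * Mᶜ.card
      = (2 ^ Module.finrank (ZMod 2) X - 1) * Mᶜ.card + Mᶜ.card := by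
    have : 1 ≤ 2 ^ Module.finrank (ZMod 2) X := Nat.one_le_two_pow
    conv_lhs => rw [← Nat.sub_add_cancel this]
    ring
  omega

theorem bb_chain (t₀ : ℕ) (k : ℕ) : k + 1 ≤ t₀ → ∀ (m K : ℕ), ∃ d : ℕ, ∀ (V : Type)
    [AddCommGroup V] [Module (ZMod 2) V] [Fintype V] (M B : Finset V), 0 ∉ M → B ⊆ M →
    d ≤ Module.finrank (ZMod 2) V → 2 ^ t₀ * Mᶜ.card ≤ 2 ^ Module.finrank (ZMod 2) V →
    2 ^ Module.finrank (ZMod 2) V ≤ K * B.card →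
    ∃ X F : Submodule (ZMod 2) V, Module.finrank (ZMod 2) X = k + 1 ∧
      Module.finrank (ZMod 2) F = m ∧ BB M X F ∧ ∃ x ∈ X, x ∈ B := by
  induction k with
  | zero =>
    intro _ m K
    obtain ⟨d, hd⟩ := hilbert m K
    refine ⟨d, fun V _ _ _ M B h0 hBM hdV _ hB => ?_⟩
    obtain ⟨y, W, hW, hyW⟩ := hd V B hdV hB
    have hyB : y ∈ B := by simpa using hyW 0 W.zero_mem
    have hy0 : y ≠ 0 := fun h => h0 (h ▸ hBM hyB)
    refine ⟨Submodule.span (ZMod 2) {y}, W, by simp [finrank_span_singleton hy0], hW, ?_,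
      y, Submodule.mem_span_singleton_self y, hyB⟩
    intro x hx hx0 f hf
    obtain ⟨c, rfl⟩ := Submodule.mem_span_singleton.1 hx
    rcases aux_zmod c with rfl | rfl
    · simp at hx0
    · rw [one_smul]; exact hBM (hyW f hf)
  | succ k ih =>
    intro hk m K
    obtain ⟨d1, hd1⟩ := bb_step m 2
    obtain ⟨d, hd⟩ := ih (by omega) d1 K
    refine ⟨d, fun V _ _ _ M B h0 hBM hdV hC hB => ?_⟩
    obtain ⟨X, F, hX, hF, hBB, x, hx, hxB⟩ := hd V M B h0 hBM hdV hC hB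
    have hA : 2 ^ Module.finrank (ZMod 2) V ≤ 2 * (extA M X).card := by
      have h1 := extA_card M X
      rw [hX] at h1
      have h2 : 2 * 2 ^ (k + 1) ≤ 2 ^ t₀ := by
        rw [← pow_succ']; exact Nat.pow_le_pow_right (by norm_num) hk
      have h3 := Nat.mul_le_mul_right Mᶜ.card h2
      rw [mul_assoc] at h3
      omega
    obtain ⟨X', F', hXX', hX', hF', hBB'⟩ := hd1 V M X F h0 hF.ge hBB hA
    exact ⟨X', F', by omega, hF', hBB', x, hXX' hx, hxB⟩

/-- dichotomy -/
theorem dichotomy (t₀ m K : ℕ) (ht : 1 ≤ t₀) : ∃ d : ℕ, ∀ (V : Type)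
    [AddCommGroup V] [Module (ZMod 2) V] [Fintype V] (M : Finset V), 0 ∉ M →
    d ≤ Module.finrank (ZMod 2) V → 2 ^ t₀ * Mᶜ.card ≤ 2 ^ Module.finrank (ZMod 2) V →
    (¬ ∃ X F : Submodule (ZMod 2) V, Module.finrank (ZMod 2) X = t₀ + 1 ∧
      Module.finrank (ZMod 2) F = m ∧ BB M X F) →
    (K * 2 ^ Module.finrank (ZMod 2) V ≤ 2 ^ Module.finrank (ZMod 2) V + K * (2 ^ t₀ * Mᶜ.card)) ∧
    K * (M.filter (fun w => 2 ^ Module.finrank (ZMod 2) V < K * rhoC Mᶜ w)).card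
      ≤ 2 ^ Module.finrank (ZMod 2) V := by
  obtain ⟨k, rfl⟩ : ∃ k, t₀ = k + 1 := ⟨t₀ - 1, by omega⟩
  obtain ⟨d1, hd1⟩ := bb_step m K
  obtain ⟨d, hd⟩ := bb_chain (k + 1) k le_rfl d1 K
  obtain ⟨d', hd'⟩ := bb_chain (k + 1) k le_rfl d1 2
  refine ⟨d + d', fun V _ _ _ M h0 hdV hC hno => ⟨?_, ?_⟩⟩
  · by_contra! hcon
    have hM : 2 ^ Module.finrank (ZMod 2) V ≤ 2 * M.card := by
      have h1 := Finset.card_add_card_compl M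
      rw [aux_card] at h1
      have h2 : 2 * Mᶜ.card ≤ 2 ^ (k + 1) * Mᶜ.card := by
        refine Nat.mul_le_mul_right _ ?_
        rw [pow_succ']; have : 1 ≤ 2 ^ k := Nat.one_le_two_pow
        omega
      omega
    obtain ⟨X, F, hX, hF, hBB, -⟩ := hd' V M M h0 subset_rfl (by omega) hC hM
    have h1 := extA_card M X
    rw [hX] at h1
    obtain ⟨X', F', -, hX', hF', hBB'⟩ := hd1 V M X F h0 hF.ge hBB (by
      have := Nat.mul_le_mul_left K h1
      rw [mul_add] at this
      omega)
    exact hno ⟨X', F', by omega, hF', hBB'⟩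
  · by_contra! hcon
    obtain ⟨X, F, hX, hF, hBB, w, hwX, hwB⟩ := hd V M _ h0 (Finset.filter_subset _ _)
      (by omega) hC hcon.le
    rw [Finset.mem_filter] at hwB
    have h1 := extA_card' M X w hwX (fun h => h0 (h ▸ hwB.1))
    rw [hX] at h1
    obtain ⟨X', F', -, hX', hF', hBB'⟩ := hd1 V M X F h0 hF.ge hBB (by
      have : rhoC Mᶜ w ≤ (extA M X).card := by omega
      exact hwB.2.le.trans (Nat.mul_le_mul_left K this))
    exact hno ⟨X', F', by omega, hF', hBB'⟩


theorem restr_of {t : ℕ} {ι : Type} [Fintype ι] (hι : Fintype.card ι = t) {V : Type}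
    [AddCommGroup V] [Module (ZMod 2) V] (M : Set V) (u : ι → V)
    (hu : LinearIndependent (ZMod 2) u) (hM : ∀ i j, i ≠ j → u i + u j ∈ M) :
    HasRestriction (cycleMatroid (⊤ : SimpleGraph (Fin t))) M := by
  let e : Fin t ≃ ι := (Fintype.equivFinOfCardEq hι).symm
  have hu' : LinearIndependent (ZMod 2) (u ∘ e) := hu.comp e e.injective
  refine ⟨Fintype.linearCombination (ZMod 2) (u ∘ e),
    linearIndependent_iff_injective_fintypeLinearCombination.1 hu', ?_⟩
  rintro _ ⟨_, ⟨i, j, hij, rfl⟩, rfl⟩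
  rw [map_add, Fintype.linearCombination_apply_single, Fintype.linearCombination_apply_single]
  simp only [one_smul, Function.comp_apply]
  exact hM _ _ (fun h => hij (e.injective h))

theorem restr_of_BB {t t₀ : ℕ} (ht : t ≤ 2 ^ (t₀ + 1)) {V : Type} [AddCommGroup V]
    [Module (ZMod 2) V] [Fintype V] (M : Finset V) (h0 : 0 ∉ M) (X F : Submodule (ZMod 2) V)
    (hX : Module.finrank (ZMod 2) X = t₀ + 1) (hF : Module.finrank (ZMod 2) F = t)
    (hBB : BB M X F) : HasRestriction (cycleMatroid (⊤ : SimpleGraph (Fin t))) (M : Set V) := by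
  have hc : Fintype.card (Fin t) ≤ Fintype.card X := by
    rw [aux_card (V := X), hX]; simpa using ht
  obtain ⟨x⟩ := Function.Embedding.nonempty_of_card_le hc
  let b := Module.finBasisOfFinrankEq (ZMod 2) F hF
  refine restr_of (ι := Fin t) (by simp) _ (fun i => (x i : V) + (b i : V)) ?_ ?_
  · rw [Fintype.linearIndependent_iff]
    intro c hc
    have hs : (∑ i, c i • (x i : V)) + ((∑ i, c i • b i : F) : V) = 0 := by
      rw [← hc]
      simp [Finset.sum_add_distrib]
    have h1 : (∑ i, c i • (x i : V)) ∈ X := X.sum_mem fun i _ => X.smul_mem _ (x i).2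
    have h2 : (∑ i, c i • (x i : V)) = 0 := by
      by_contra hne
      exact h0 (hs ▸ hBB _ h1 hne _ (∑ i, c i • b i : F).2)
    rw [h2, zero_add] at hs
    have h3 : (∑ i, c i • b i : F) = 0 := by exact_mod_cast hs
    exact Fintype.linearIndependent_iff.1 b.linearIndependent c h3
  · intro i j hij
    have hne : (x i : V) + (x j : V) ≠ 0 := by
      intro h
      have : (x i : V) = x j := by
        have := congrArg (· + (x j : V)) h
        simpa [aux_cancel] using this
      exact hij (x.injective (Subtype.ext this))
    have := hBB _ (X.add_mem (x i).2 (x j).2) hne _ (F.add_mem (b i).2 (b j).2)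
    rw [add_add_add_comm]
    exact this

theorem rho_tri {V : Type} [AddCommGroup V] [Module (ZMod 2) V] (C : Finset V) (w w' : V) :
    rhoC C w + rhoC C w' ≤ C.card + rhoC C (w + w') := by
  unfold rhoC
  rw [← Finset.card_inter_add_card_union, add_comm]
  refine Nat.add_le_add (Finset.card_le_card (Finset.union_subset (Finset.filter_subset _ _)
    (Finset.filter_subset _ _))) ?_
  refine Finset.card_le_card_of_injOn (fun a => a + w) ?_ (fun a _ b _ h => add_right_cancel h)
  intro a ha
  simp only [Finset.coe_inter, Finset.coe_filter, Set.mem_inter_iff, Set.mem_ofPred_eq] at ha ⊢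
  refine ⟨ha.1.2, ?_⟩
  rw [← add_assoc, aux_cancel]; exact ha.2.2

open scoped Pointwise in
theorem subgroup_of {V : Type} [AddCommGroup V] [Module (ZMod 2) V] (S : Finset V) (h0 : 0 ∈ S)
    (hS : 2 * (S + S).card < 3 * S.card) :
    ∃ G : Submodule (ZMod 2) V, ∀ x, x ∈ G ↔ x ∈ S + S := by
  have key : ∀ g ∈ S + S, S.card < 2 * rhoC S g := by
    intro g hg
    obtain ⟨a, ha, b, hb, rfl⟩ := Finset.mem_add.1 hg
    have h1 : (({a} + S) ∪ ({b} + S)).card ≤ (S + S).card := by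
      refine Finset.card_le_card (Finset.union_subset ?_ ?_)
      · exact Finset.add_subset_add_right (by simpa using ha)
      · exact Finset.add_subset_add_right (by simpa using hb)
    have h2 := Finset.card_inter_add_card_union ({a} + S) ({b} + S)
    rw [Finset.card_singleton_add, Finset.card_singleton_add] at h2
    have h3 : (({a} + S) ∩ ({b} + S)).card ≤ rhoC S (a + b) := by
      refine Finset.card_le_card_of_injOn (fun x => x + a) ?_ (fun a _ b _ h => add_right_cancel h)
      intro x hx
      simp only [Finset.coe_inter, Set.mem_inter_iff, Finset.mem_coe, Finset.mem_add,
        Finset.mem_singleton] at hx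
      obtain ⟨⟨a', ha', s, hs, rfl⟩, ⟨b', hb', s', hs', h⟩⟩ := hx
      rw [hb', ha'] at h
      rw [ha']
      simp only [Finset.coe_filter, Set.mem_ofPred_eq]
      have e1 : a + s + a = s := by rw [add_comm a s, aux_cancel]
      have e2 : a + s + a + (a + b) = s' := by
        rw [← add_assoc, aux_cancel, ← h, add_comm b s', aux_cancel]
      rw [e2, e1]; exact ⟨hs, hs'⟩
    omega
  have hadd : ∀ {g h : V}, g ∈ S + S → h ∈ S + S → g + h ∈ S + S := by
    intro g h hg hh
    have := rho_tri S g h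
    have h1 := key g hg
    have h2 := key h hh
    have h3 : 0 < rhoC S (g + h) := by omega
    obtain ⟨s, hs⟩ := Finset.card_pos.1 h3
    rw [Finset.mem_filter] at hs
    refine Finset.mem_add.2 ⟨s, hs.1, _, hs.2, ?_⟩
    rw [← add_assoc, aux_self, zero_add]
  have hz : (0 : V) ∈ S + S := Finset.mem_add.2 ⟨0, h0, 0, h0, by simp⟩
  refine ⟨{ carrier := {x | x ∈ S + S}, add_mem' := hadd, zero_mem' := hz, smul_mem' := ?_ },
    fun x => Iff.rfl⟩
  intro c x hx
  rcases aux_zmod c with rfl | rfl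
  · rw [zero_smul]; exact hz
  · rw [one_smul]; exact hx

set_option maxHeartbeats 1000000 in
open scoped Pointwise in
theorem stability (t₀ m L : ℕ) (hL : 1 ≤ L) : ∃ d : ℕ, ∀ (V : Type)
    [AddCommGroup V] [Module (ZMod 2) V] [Fintype V] (M : Finset V), 0 ∉ M →
    d ≤ Module.finrank (ZMod 2) V → 2 ^ t₀ * Mᶜ.card ≤ 2 ^ Module.finrank (ZMod 2) V →
    (¬ ∃ X F : Submodule (ZMod 2) V, Module.finrank (ZMod 2) X = t₀ + 1 ∧
      Module.finrank (ZMod 2) F = m ∧ BB M X F) →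
    ∃ G : Submodule (ZMod 2) V, Module.finrank (ZMod 2) G + t₀ = Module.finrank (ZMod 2) V ∧
      L * (Mᶜ.filter (fun x => x ∉ G)).card ≤ 2 ^ Module.finrank (ZMod 2) V := by
  rcases Nat.eq_zero_or_pos t₀ with rfl | hpos
  · refine ⟨0, fun V _ _ _ M _ _ _ _ => ⟨⊤, by simp, by simp⟩⟩
  set r := 2 ^ t₀ with hr
  obtain ⟨d, hd⟩ := dichotomy t₀ m (1000 * r ^ 2 * L) hpos
  refine ⟨d, fun V _ _ _ M h0 hdV hC hno => ?_⟩
  obtain ⟨hc, hB⟩ := hd V M h0 hdV hC hno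
  set N := 2 ^ Module.finrank (ZMod 2) V with hN
  set C := Mᶜ with hCdef
  set K := 1000 * r ^ 2 * L with hK
  set B := M.filter (fun w => N < K * rhoC C w) with hBdef
  have hr1 : 1 ≤ r := Nat.one_le_two_pow
  have hN1 : 1 ≤ N := Nat.one_le_two_pow
  have hr1' : (1 : ℝ) ≤ r := by exact_mod_cast hr1
  have hN1' : (1 : ℝ) ≤ N := by exact_mod_cast hN1
  have hL' : (1 : ℝ) ≤ L := by exact_mod_cast hL
  have hK' : (K : ℝ) = 1000 * r ^ 2 * L := by rw [hK]; push_cast; ring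
  have hKr : (1000 : ℝ) * r ^ 2 ≤ K := by rw [hK']; nlinarith [sq_nonneg (r : ℝ)]
  have hKr1 : (1000 : ℝ) * r ≤ K := by nlinarith
  have hK1 : (1000 : ℝ) ≤ K := by nlinarith
  have hCr : (r : ℝ) * C.card ≤ N := by exact_mod_cast hC
  have hc' : (K : ℝ) * N ≤ N + K * (r * C.card) := by exact_mod_cast hc
  have hB' : (K : ℝ) * B.card ≤ N := by exact_mod_cast hB
  have hNc : (N : ℝ) * 999 ≤ 1000 * (r * C.card) := by
    by_contra! h
    nlinarith
  have hcpos : (0 : ℝ) < C.card := by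
    by_contra! h
    have : (r : ℝ) * C.card ≤ 0 := mul_nonpos_of_nonneg_of_nonpos (by linarith) h
    linarith
  -- second moment
  have hsum : (∑ w ∈ C, (rhoC C w : ℝ)) + ∑ w ∈ M, (rhoC C w : ℝ) = (C.card : ℝ) ^ 2 := by
    have := sum_rho C
    rw [← Finset.sum_compl_add_sum M] at this
    exact_mod_cast this
  have hsumM : (K : ℝ) * ∑ w ∈ M, (rhoC C w : ℝ) ≤ 2 * N ^ 2 := by
    rw [← Finset.sum_filter_add_sum_filter_not M (fun w => N < K * rhoC C w), mul_add]
    have h1 : (∑ w ∈ B, (rhoC C w : ℝ)) ≤ B.card * N := by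
      rw [← nsmul_eq_mul]
      refine Finset.sum_le_card_nsmul _ _ _ fun w _ => ?_
      have h1 : (rhoC C w : ℝ) ≤ C.card := by exact_mod_cast rho_le C w
      nlinarith
    have h2 : (K : ℝ) * ∑ w ∈ M.filter (fun w => ¬ N < K * rhoC C w), (rhoC C w : ℝ) ≤ N * N := by
      rw [Finset.mul_sum]
      calc _ ≤ ∑ w ∈ M.filter (fun w => ¬ N < K * rhoC C w), (N : ℝ) := by
            refine Finset.sum_le_sum fun w hw => ?_
            rw [Finset.mem_filter, not_lt] at hw
            exact_mod_cast hw.2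
        _ ≤ ∑ w : V, (N : ℝ) :=
            Finset.sum_le_sum_of_subset_of_nonneg (Finset.subset_univ _) (fun _ _ _ => by linarith)
        _ = _ := by simp [aux_card, hN]
    have h3 : (K : ℝ) * ∑ w ∈ B, (rhoC C w : ℝ) ≤ N * N := by
      calc _ ≤ (K : ℝ) * (B.card * N) := mul_le_mul_of_nonneg_left h1 (by linarith)
        _ = K * B.card * N := by ring
        _ ≤ N * N := mul_le_mul_of_nonneg_right hB' (by linarith)
    linarith [sq (N : ℝ)]
  set C1 := C.filter (fun w => 8 * rhoC C w < 7 * C.card) with hC1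
  have hC1b : (K : ℝ) * C1.card * C.card ≤ 16 * N ^ 2 := by
    have h1 : (C1.card : ℝ) * (C.card / 8) ≤ ∑ w ∈ C, ((C.card : ℝ) - rhoC C w) := by
      calc (C1.card : ℝ) * (C.card / 8) = ∑ w ∈ C1, ((C.card : ℝ) / 8) := by simp
        _ ≤ ∑ w ∈ C1, ((C.card : ℝ) - rhoC C w) := by
            refine Finset.sum_le_sum fun w hw => ?_
            rw [hC1, Finset.mem_filter] at hw
            have : (8 : ℝ) * rhoC C w < 7 * C.card := by exact_mod_cast hw.2
            linarith
        _ ≤ _ := by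
            refine Finset.sum_le_sum_of_subset_of_nonneg (Finset.filter_subset _ _) fun w _ _ => ?_
            have h1 : (rhoC C w : ℝ) ≤ C.card := by exact_mod_cast rho_le C w
            linarith
    rw [Finset.sum_sub_distrib, Finset.sum_const, nsmul_eq_mul] at h1
    have h2 : (C1.card : ℝ) * (C.card / 8) ≤ ∑ w ∈ M, (rhoC C w : ℝ) := by nlinarith
    have h3 := mul_le_mul_of_nonneg_left h2 (by linarith : (0 : ℝ) ≤ K)
    nlinarith
  have hN2 : (N : ℝ) ≤ 2 * r * C.card := by nlinarith
  have hC1c : (K : ℝ) * C1.card ≤ 64 * r ^ 2 * C.card := by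
    have h1 : (N : ℝ) ^ 2 ≤ (2 * r * C.card) ^ 2 := pow_le_pow_left₀ (by linarith) hN2 2
    have h2 : (K : ℝ) * C1.card * C.card ≤ 64 * r ^ 2 * C.card * C.card := by nlinarith
    exact le_of_mul_le_mul_right h2 hcpos
  have hC1small : (C1.card : ℝ) * 10 ≤ C.card := by
    by_contra! h
    have h4 : (1000 : ℝ) * r ^ 2 * C1.card ≤ K * C1.card :=
      mul_le_mul_of_nonneg_right hKr (by positivity)
    have : (0 : ℝ) < r ^ 2 := by positivity
    nlinarith
  set S := C \ C1 with hSdef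
  have hScard : (S.card : ℝ) + C1.card = C.card := by
    have := Finset.card_sdiff_add_card_eq_card (Finset.filter_subset (fun w => 8 * rhoC C w < 7 * C.card) C)
    exact_mod_cast this
  have h0S : (0 : V) ∈ S := by
    rw [hSdef, Finset.mem_sdiff, hC1, Finset.mem_filter, rho_zero]
    refine ⟨by simpa [hCdef] using h0, ?_⟩
    rintro ⟨_, h⟩
    omega
  have hSS : S + S ⊆ C ∪ B := by
    intro x hx
    obtain ⟨a, ha, b, hb, rfl⟩ := Finset.mem_add.1 hx
    rw [Finset.mem_union]
    by_cases hxC : a + b ∈ C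
    · exact Or.inl hxC
    right
    have hxM : a + b ∈ M := by simpa [hCdef] using hxC
    rw [hBdef, Finset.mem_filter]
    refine ⟨hxM, ?_⟩
    have ha' : 7 * C.card ≤ 8 * rhoC C a := by
      rw [hSdef, Finset.mem_sdiff, hC1, Finset.mem_filter] at ha
      by_contra! h
      exact ha.2 ⟨ha.1, h⟩
    have hb' : 7 * C.card ≤ 8 * rhoC C b := by
      rw [hSdef, Finset.mem_sdiff, hC1, Finset.mem_filter] at hb
      by_contra! h
      exact hb.2 ⟨hb.1, h⟩
    have h1 := rho_tri C a b
    have h2 : C.card ≤ 2 * rhoC C (a + b) := by omega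
    have h2' : (C.card : ℝ) ≤ 2 * rhoC C (a + b) := by exact_mod_cast h2
    have : (N : ℝ) < K * rhoC C (a + b) := by
      have h6 : (0 : ℝ) < rhoC C (a + b) := by linarith
      calc (N : ℝ) ≤ 2 * r * C.card := hN2
        _ ≤ 2 * r * (2 * rhoC C (a + b)) := mul_le_mul_of_nonneg_left h2' (by linarith)
        _ = 4 * r * rhoC C (a + b) := by ring
        _ < K * rhoC C (a + b) := mul_lt_mul_of_pos_right (by linarith) h6
    exact_mod_cast this
  have hSScard : ((S + S).card : ℝ) ≤ C.card + B.card := by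
    exact_mod_cast (Finset.card_le_card hSS).trans (Finset.card_union_le _ _)
  have hBc : (B.card : ℝ) * 100 ≤ C.card := by
    by_contra! h
    have h4 : (1000 : ℝ) * r * B.card ≤ K * B.card :=
      mul_le_mul_of_nonneg_right hKr1 (by positivity)
    nlinarith
  obtain ⟨G, hG⟩ := subgroup_of S h0S (by
    have : (2 : ℝ) * (S + S).card < 3 * S.card := by linarith
    exact_mod_cast this)
  have hGcard : (S + S).card = 2 ^ Module.finrank (ZMod 2) G := by
    rw [← aux_card, Fintype.card_subtype]
    congr 1
    ext x; simp [hG]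
  have hSG : ∀ x ∈ S, x ∈ G := by
    intro x hx
    rw [hG]
    exact Finset.mem_add.2 ⟨x, hx, 0, h0S, by simp⟩
  have hSle : S.card ≤ (S + S).card := Finset.card_le_card fun x hx => (hG x).1 (hSG x hx)
  have hSle' : (S.card : ℝ) ≤ (S + S).card := by exact_mod_cast hSle
  refine ⟨G, ?_, ?_⟩
  · have hup : (2 : ℝ) ^ (Module.finrank (ZMod 2) G + t₀) < 2 ^ (Module.finrank (ZMod 2) V + 1) := by
      have e1 : (2 : ℝ) ^ (Module.finrank (ZMod 2) G + t₀) = (S + S).card * r := by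
        rw [hGcard, pow_add, hr]; push_cast; ring
      have e2 : (2 : ℝ) ^ (Module.finrank (ZMod 2) V + 1) = 2 * N := by
        rw [hN, pow_succ]; push_cast; ring
      rw [e1, e2]
      have : ((S + S).card : ℝ) ≤ 3/2 * C.card := by linarith
      nlinarith
    have hlo : (2 : ℝ) ^ (Module.finrank (ZMod 2) V) < 2 ^ (Module.finrank (ZMod 2) G + t₀ + 1) := by
      have e1 : (2 : ℝ) ^ (Module.finrank (ZMod 2) G + t₀ + 1) = 2 * (S + S).card * r := by
        rw [hGcard, pow_succ, pow_add, hr]; push_cast; ring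
      have e2 : (2 : ℝ) ^ (Module.finrank (ZMod 2) V) = N := by
        rw [hN]; push_cast; ring
      rw [e1, e2]
      have : (9/10 : ℝ) * C.card ≤ (S + S).card := by linarith
      nlinarith
    have h1 := (pow_lt_pow_iff_right₀ (by norm_num : (1 : ℝ) < 2)).1 hup
    have h2 := (pow_lt_pow_iff_right₀ (by norm_num : (1 : ℝ) < 2)).1 hlo
    omega
  · have hsub : C.filter (fun x => x ∉ G) ⊆ C1 := by
      intro x hx
      rw [Finset.mem_filter] at hx
      by_contra h
      exact hx.2 (hSG x (Finset.mem_sdiff.2 ⟨hx.1, h⟩))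
    have h1 : ((C.filter (fun x => x ∉ G)).card : ℝ) ≤ C1.card := by
      exact_mod_cast Finset.card_le_card hsub
    have h2 : (L : ℝ) * C1.card ≤ C.card := by
      rw [hK'] at hC1c
      have : (0 : ℝ) < r ^ 2 := by positivity
      have h5 : (r : ℝ) ^ 2 * (1000 * (L * C1.card)) ≤ r ^ 2 * (64 * C.card) := by linarith
      have := le_of_mul_le_mul_left h5 this
      linarith
    have h3 : (L : ℝ) * (C.filter (fun x => x ∉ G)).card ≤ N := by nlinarith
    exact_mod_cast h3


theorem exists_sub {V : Type} [AddCommGroup V] [Module (ZMod 2) V] [Fintype V]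
    (W : Submodule (ZMod 2) V) (k : ℕ) (hk : k ≤ Module.finrank (ZMod 2) W) :
    ∃ D : Submodule (ZMod 2) V, D ≤ W ∧ Module.finrank (ZMod 2) D = k := by
  let b := Module.finBasis (ZMod 2) W
  let f : Fin k → V := fun i => (b (Fin.castLE hk i) : V)
  have hf : LinearIndependent (ZMod 2) f := by
    have h1 := b.linearIndependent.comp (Fin.castLE hk) (Fin.castLE_injective hk)
    exact h1.map' W.subtype (Submodule.ker_subtype W)
  refine ⟨Submodule.span (ZMod 2) (Set.range f), ?_, ?_⟩
  · rw [Submodule.span_le]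
    rintro _ ⟨i, rfl⟩
    exact (b (Fin.castLE hk i)).2
  · rw [finrank_span_eq_card hf]; simp

theorem exists_indep {V : Type} [AddCommGroup V] [Module (ZMod 2) V] [Fintype V]
    (D : Finset V) (h0 : 0 ∉ D) (s : ℕ) (hs : 2 ^ s ≤ D.card) :
    ∃ b : Fin (s + 1) → V, (∀ i, b i ∈ D) ∧ LinearIndependent (ZMod 2) b := by
  obtain ⟨f, hf, -, hli⟩ := Submodule.exists_fun_fin_finrank_span_eq (ZMod 2) (D : Set V)
  have hlt : s < Module.finrank (ZMod 2) (Submodule.span (ZMod 2) (D : Set V)) := by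
    have h1 : (insert 0 D).card ≤ Fintype.card (Submodule.span (ZMod 2) (D : Set V)) := by
      rw [Fintype.card_subtype]
      refine Finset.card_le_card fun x hx => ?_
      rw [Finset.mem_filter]
      refine ⟨Finset.mem_univ _, ?_⟩
      rcases Finset.mem_insert.1 hx with rfl | h
      · exact Submodule.zero_mem _
      · exact Submodule.subset_span h
    rw [aux_card, Finset.card_insert_of_notMem h0] at h1
    exact (Nat.pow_lt_pow_iff_right (by norm_num : 1 < 2)).1 (by omega)
  exact ⟨fun i => f (Fin.castLE hlt i), fun i => hf _, hli.comp _ (Fin.castLE_injective hlt)⟩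

open scoped Pointwise in
theorem greedy {V : Type} [AddCommGroup V] [Module (ZMod 2) V] [Fintype V] (M : Finset V)
    (G : Submodule (ZMod 2) V) (t r : ℕ) [Fintype (V ⧸ G)] (hr : Fintype.card (V ⧸ G) = r)
    (hrt : r ≤ t) (D : Submodule (ZMod 2) V) (hD : Module.finrank (ZMod 2) D ≤ t - r)
    (d : V ⧸ G → V) (hdG : ∀ q, d q ∈ G)
    (hbig : 2 ^ t + 4 * r * (Mᶜ.filter (fun x => x ∉ G)).card < 2 ^ Module.finrank (ZMod 2) G)
    (s : Finset (V ⧸ G)) :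
    ∃ v : V ⧸ G → V, (∀ q, G.mkQ (v q) = q) ∧
      (∀ q ∈ s, ∀ q' ∈ s, q ≠ q' → ∀ a ∈ ({0, d q} : Finset V), ∀ b ∈ ({0, d q'} : Finset V),
        v q + a + (v q' + b) ∈ M) ∧
      (∀ c : V ⧸ G → ZMod 2, ∑ q ∈ s, c q • v q ∈ D → ∀ q ∈ s, c q = 0) := by
  induction s using Finset.induction_on with
  | empty =>
    refine ⟨fun q => Function.surjInv G.mkQ_surjective q,
      fun q => Function.surjInv_eq _ q, by simp, by simp⟩
  | insert q₀ s hq₀ ih =>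
    obtain ⟨v, hv1, hv2, hv3⟩ := ih
    set Cb := Mᶜ.filter (fun x => x ∉ G) with hCb
    let T : Submodule (ZMod 2) V := D ⊔ Submodule.span (ZMod 2) ((s.image v : Finset V) : Set V)
    let Z : Finset V := s.biUnion (fun q => {0, d q₀} + ({v q} + {0, d q}))
    let Y : Finset V := Finset.univ.filter (fun y => G.mkQ y = q₀)
    have hsr : s.card + 1 ≤ r := by
      rw [← hr, ← Finset.card_insert_of_notMem hq₀]; exact Finset.card_le_univ _
    have hT : (Finset.univ.filter (fun y => y ∈ T)).card ≤ 2 ^ t := by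
      rw [← Fintype.card_subtype]
      have : Fintype.card T = 2 ^ Module.finrank (ZMod 2) T := aux_card
      refine (Eq.le ?_).trans (this.le.trans (Nat.pow_le_pow_right (by norm_num) ?_))
      · exact Fintype.card_congr (Equiv.refl _)
      · have h1 := Submodule.finrank_add_le_finrank_add_finrank D
          (Submodule.span (ZMod 2) ((s.image v : Finset V) : Set V))
        have h2 := finrank_span_finset_le_card (R := ZMod 2) (s.image v)
        have h3 : (s.image v).card ≤ s.card := Finset.card_image_le
        simp only [Set.finrank] at h2
        change Module.finrank (ZMod 2) T ≤ _ at h1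
        omega
    have hZ : Z.card ≤ 4 * r := by
      have h1 : Z.card ≤ s.card * 4 := by
        refine Finset.card_biUnion_le_card_mul _ _ _ fun q _ => ?_
        refine Finset.card_add_le.trans ?_
        rw [Finset.card_singleton_add]
        exact Nat.mul_le_mul Finset.card_le_two Finset.card_le_two
      omega
    have hY : 2 ^ Module.finrank (ZMod 2) G ≤ Y.card := by
      rw [← aux_card, ← Finset.card_univ]
      refine Finset.card_le_card_of_injOn (fun g : G => (g : V) + v q₀) ?_ ?_
      · intro g _
        have h1 : G.mkQ ((g : V) + v q₀) = q₀ := by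
          rw [map_add, hv1]
          have : G.mkQ (g : V) = 0 := by simp
          rw [this, zero_add]
        exact Finset.mem_coe.2 (Finset.mem_filter.2 ⟨Finset.mem_univ _, h1⟩)
      · intro g _ g' _ h
        exact Subtype.ext (add_right_cancel h)
    have hex : ∃ y ∈ Y, y ∉ (Finset.univ.filter (fun y => y ∈ T)) ∪ (Z + Cb) := by
      by_contra! hcon
      have h1 := (Finset.card_le_card (s := Y) hcon).trans (Finset.card_union_le _ _)
      have h2 : (Z + Cb).card ≤ 4 * r * Cb.card :=
        Finset.card_add_le.trans (Nat.mul_le_mul_right _ hZ)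
      omega
    obtain ⟨y, hyY, hy⟩ := hex
    have hyq : G.mkQ y = q₀ := (Finset.mem_filter.1 hyY).2
    rw [Finset.mem_union, not_or] at hy
    obtain ⟨hyT, hyZ⟩ := hy
    have hyT' : y ∉ T := by simpa using hyT
    have key : ∀ q ∈ s, ∀ a ∈ ({0, d q₀} : Finset V), ∀ b ∈ ({0, d q} : Finset V),
        y + a + (v q + b) ∈ M := by
      intro q hq a ha b hb
      by_contra hM
      apply hyZ
      have hz : a + (v q + b) ∈ Z := Finset.mem_biUnion.2 ⟨q, hq, Finset.add_mem_add ha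
        (Finset.add_mem_add (Finset.mem_singleton_self _) hb)⟩
      refine Finset.mem_add.2 ⟨_, hz, y + a + (v q + b), ?_, ?_⟩
      · rw [hCb, Finset.mem_filter, Finset.mem_compl]
        refine ⟨hM, fun hG => ?_⟩
        have ha' : a ∈ G := by
          rcases Finset.mem_insert.1 ha with rfl | h
          · exact G.zero_mem
          · rw [Finset.mem_singleton.1 h]; exact hdG _
        have hb' : b ∈ G := by
          rcases Finset.mem_insert.1 hb with rfl | h
          · exact G.zero_mem
          · rw [Finset.mem_singleton.1 h]; exact hdG _
        have h0 : G.mkQ (y + a + (v q + b)) = 0 := (Submodule.Quotient.mk_eq_zero G).2 hG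
        have ha0 : G.mkQ a = 0 := by simpa using ha'
        have hb0 : G.mkQ b = 0 := by simpa using hb'
        rw [map_add, map_add, map_add, ha0, hb0, hyq, hv1, add_zero, add_zero] at h0
        have h5 := congrArg (· + q) h0
        simp only [aux_cancel, zero_add] at h5
        exact hq₀ (h5 ▸ hq)
      · rw [show y + a + (v q + b) = y + (a + (v q + b)) by abel, add_comm, aux_cancel]
    have hne : ∀ q ∈ s, q ≠ q₀ := fun q hq h => hq₀ (h ▸ hq)
    refine ⟨Function.update v q₀ y, ?_, ?_, ?_⟩
    · intro q
      by_cases h : q = q₀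
      · subst h; simpa using hyq
      · rw [Function.update_of_ne h]; exact hv1 q
    · intro q hq q' hq' hqq a ha b hb
      rcases Finset.mem_insert.1 hq with rfl | hqs
      · rcases Finset.mem_insert.1 hq' with rfl | hqs'
        · exact absurd rfl hqq
        · rw [Function.update_self, Function.update_of_ne (hne _ hqs')]
          exact key q' hqs' a ha b hb
      · rcases Finset.mem_insert.1 hq' with rfl | hqs'
        · rw [Function.update_self, Function.update_of_ne (hne _ hqs), add_comm]
          exact key q hqs b hb a ha
        · rw [Function.update_of_ne (hne _ hqs), Function.update_of_ne (hne _ hqs')]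
          exact hv2 q hqs q' hqs' hqq a ha b hb
    · intro c hc
      rw [Finset.sum_insert hq₀, Function.update_self] at hc
      have hsum : ∑ q ∈ s, c q • Function.update v q₀ y q = ∑ q ∈ s, c q • v q :=
        Finset.sum_congr rfl fun q hq => by rw [Function.update_of_ne (hne _ hq)]
      rw [hsum] at hc
      have hspan : ∑ q ∈ s, c q • v q ∈ T := by
        refine Submodule.sum_mem _ fun q hq => Submodule.smul_mem _ _ ?_
        refine Submodule.mem_sup_right (Submodule.subset_span ?_)
        exact Finset.mem_coe.2 (Finset.mem_image_of_mem v hq)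
      have hc0 : c q₀ = 0 := by
        rcases aux_zmod (c q₀) with h | h
        · exact h
        · exfalso
          rw [h, one_smul] at hc
          have h6 : y + ∑ q ∈ s, c q • v q ∈ T := Submodule.mem_sup_left hc
          exact hyT' ((Submodule.add_mem_iff_left T hspan).1 h6)
      rw [hc0, zero_smul, zero_add] at hc
      intro q hq
      rcases Finset.mem_insert.1 hq with rfl | hqs
      · exact hc0
      · exact hv3 c hc q hqs

theorem endgame {t t₀ : ℕ} (h1 : 2 ^ t₀ < t) (h2 : t ≤ 2 ^ (t₀ + 1)) {V : Type}
    [AddCommGroup V] [Module (ZMod 2) V] [Fintype V] (M : Finset V) (h0 : 0 ∉ M)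
    (G : Submodule (ZMod 2) V) (hG : Module.finrank (ZMod 2) G + t₀ = Module.finrank (ZMod 2) V)
    (hbig : 2 ^ t + 4 * 2 ^ t₀ * (Mᶜ.filter (fun x => x ∉ G)).card < 2 ^ Module.finrank (ZMod 2) G)
    (hMG : 2 ^ (t - 2 ^ t₀ - 1) ≤ (M.filter (fun x => x ∈ G)).card) :
    HasRestriction (cycleMatroid (⊤ : SimpleGraph (Fin t))) (M : Set V) := by
  set r := 2 ^ t₀ with hr
  have h2' : t ≤ 2 * r := by rw [hr, ← pow_succ']; exact h2
  obtain ⟨b, hb, hbli⟩ := exists_indep (M.filter (fun x => x ∈ G)) (by simp [h0]) _ hMG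
  have : Fintype (V ⧸ G) := Fintype.ofFinite _
  have hQ : Fintype.card (V ⧸ G) = r := by
    rw [aux_card]
    have := Submodule.finrank_quotient_add_finrank G
    rw [hr]; congr 1; omega
  obtain ⟨J, -, hJ⟩ := Finset.exists_subset_card_eq (s := (Finset.univ : Finset (V ⧸ G)))
    (n := t - r - 1 + 1) (by rw [Finset.card_univ, hQ]; omega)
  let e : J ≃ Fin (t - r - 1 + 1) := J.equivFinOfCardEq hJ
  let d : V ⧸ G → V := fun q => if h : q ∈ J then b (e ⟨q, h⟩) else 0
  have hdJ : ∀ j : J, d j = b (e j) := fun j => by simp [d]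
  let D := Submodule.span (ZMod 2) (Set.range b)
  have hdG : ∀ q, d q ∈ G := by
    intro q
    by_cases h : q ∈ J
    · simp only [d, h, dif_pos]; exact (Finset.mem_filter.1 (hb _)).2
    · simp [d, h]
  have hDr : Module.finrank (ZMod 2) D ≤ t - r := by
    have := finrank_range_le_card (R := ZMod 2) b
    simp only [Set.finrank, Fintype.card_fin] at this
    change Module.finrank (ZMod 2) D ≤ _ at this
    omega
  obtain ⟨v, hv1, hv2, hv3⟩ := greedy M G t r hQ h1.le D hDr d hdG hbig Finset.univ
  have hself : ∀ j : J, d j ∈ M := fun j => by rw [hdJ]; exact (Finset.mem_filter.1 (hb _)).1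
  refine restr_of (ι := (V ⧸ G) ⊕ J) ?_ _ (Sum.elim v (fun j => v j + d j)) ?_ ?_
  · rw [Fintype.card_sum, hQ, Fintype.card_coe, hJ]; omega
  · rw [Fintype.linearIndependent_iff]
    intro c hc
    rw [Fintype.sum_sum_type] at hc
    simp only [Sum.elim_inl, Sum.elim_inr, smul_add, Finset.sum_add_distrib] at hc
    let cJ : V ⧸ G → ZMod 2 := fun q => if h : q ∈ J then c (Sum.inr ⟨q, h⟩) else 0
    have hcJ : ∀ j : J, cJ j = c (Sum.inr j) := fun j => by simp [cJ]
    have hsumJ : ∑ q, cJ q • v q = ∑ j : J, c (Sum.inr j) • v j := by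
      rw [← Finset.sum_subset (Finset.subset_univ J)
        (fun q _ hq => by simp [cJ, hq]), ← Finset.sum_coe_sort]
      exact Finset.sum_congr rfl fun j _ => by rw [hcJ]
    have hmain : ∑ q, (c (Sum.inl q) + cJ q) • v q + ∑ j : J, c (Sum.inr j) • d j = 0 := by
      simp only [add_smul, Finset.sum_add_distrib]
      rw [hsumJ, add_assoc, hc]
    have hDm : ∑ j : J, c (Sum.inr j) • d j ∈ D := by
      refine Submodule.sum_mem _ fun j _ => Submodule.smul_mem _ _ ?_
      rw [hdJ]; exact Submodule.subset_span ⟨_, rfl⟩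
    have hz := hv3 (fun q => c (Sum.inl q) + cJ q) (by
      have h5 := D.zero_mem
      rw [← hmain] at h5
      exact (Submodule.add_mem_iff_left D hDm).1 h5)
    have hz' : ∀ q, c (Sum.inl q) + cJ q = 0 := fun q => hz q (Finset.mem_univ q)
    simp only [hz', zero_smul, Finset.sum_const_zero, zero_add, hdJ] at hmain
    have hbe : LinearIndependent (ZMod 2) (fun j : J => b (e j)) := hbli.comp e e.injective
    have hJ0 := Fintype.linearIndependent_iff.1 hbe (fun j => c (Sum.inr j)) hmain
    rintro (q | j)
    · have := hz' q
      have h6 : cJ q = 0 := by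
        by_cases h : q ∈ J
        · exact (hcJ ⟨q, h⟩).trans (hJ0 _)
        · simp [cJ, h]
      rwa [h6, add_zero] at this
    · exact hJ0 j
  · have hz : ∀ q, (0 : V) ∈ ({0, d q} : Finset V) := fun q => by simp
    have hd : ∀ q, d q ∈ ({0, d q} : Finset V) := fun q => by simp
    have hP : ∀ q q', q ≠ q' → ∀ a ∈ ({0, d q} : Finset V), ∀ b ∈ ({0, d q'} : Finset V),
        v q + a + (v q' + b) ∈ M := fun q q' h =>
      hv2 q (Finset.mem_univ _) q' (Finset.mem_univ _) h
    rintro (q | j) (q' | j') hij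
    · have := hP q q' (fun h => hij (by rw [h])) 0 (hz _) 0 (hz _)
      simpa using this
    · by_cases h : q = j'
      · subst h
        have : v j' + (v j' + d j') = d j' := by rw [← add_assoc, aux_self, zero_add]
        simpa [this] using hself j'
      · have := hP q j' h 0 (hz _) _ (hd _)
        simpa using this
    · by_cases h : (j : V ⧸ G) = q'
      · subst h
        have : v j + d j + v j = d j := by rw [add_comm, ← add_assoc, aux_self, zero_add]
        simpa [this] using hself j
      · have := hP j q' h _ (hd _) 0 (hz _)
        simpa using this
    · have := hP j j' (fun h => hij (by rw [Subtype.ext h])) _ (hd _) _ (hd _)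
      simpa using this


theorem card_filter_sub {V : Type} [AddCommGroup V] [Module (ZMod 2) V] [Fintype V]
    (G : Submodule (ZMod 2) V) :
    (Finset.univ.filter (fun x => x ∈ G)).card = 2 ^ Module.finrank (ZMod 2) G := by
  rw [← Fintype.card_subtype]
  exact aux_card (V := G)

theorem upper (t t₀ : ℕ) (h1 : 2 ^ t₀ < t) (h2 : t ≤ 2 ^ (t₀ + 1)) :
    ∃ d : ℕ, ∀ (V : Type) [AddCommGroup V] [Module (ZMod 2) V] [Fintype V] (M : Finset V), 0 ∉ M →
    d ≤ Module.finrank (ZMod 2) V →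
    2 ^ Module.finrank (ZMod 2) V + 2 ^ (t - 2 ^ t₀ - 1) ≤
      M.card + 2 ^ (Module.finrank (ZMod 2) V - t₀) →
    HasRestriction (cycleMatroid (⊤ : SimpleGraph (Fin t))) (M : Set V) := by
  have hr1 : 1 ≤ 2 ^ t₀ := Nat.one_le_two_pow
  obtain ⟨d, hd⟩ := stability t₀ t (8 * (2 ^ t₀) ^ 2) (by nlinarith)
  refine ⟨d + (t + t₀ + 2), fun V _ _ _ M h0 hdV hM' => ?_⟩
  have hM : Mᶜ.card + 2 ^ (t - 2 ^ t₀ - 1) ≤ 2 ^ (Module.finrank (ZMod 2) V - t₀) := by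
    have h5 := Finset.card_add_card_compl M
    rw [aux_card] at h5
    omega
  by_cases hBB : ∃ X F : Submodule (ZMod 2) V, Module.finrank (ZMod 2) X = t₀ + 1 ∧
      Module.finrank (ZMod 2) F = t ∧ BB M X F
  · obtain ⟨X, F, hX, hF, h⟩ := hBB
    exact restr_of_BB h2 M h0 X F hX hF h
  have hN : 2 ^ Module.finrank (ZMod 2) V = 2 ^ t₀ * 2 ^ (Module.finrank (ZMod 2) V - t₀) := by
    rw [← pow_add]; congr 1; omega
  have hC : 2 ^ t₀ * Mᶜ.card ≤ 2 ^ Module.finrank (ZMod 2) V := by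
    rw [hN]; exact Nat.mul_le_mul_left _ ((Nat.le_add_right _ _).trans hM)
  obtain ⟨G, hG, hsm⟩ := hd V M h0 (by omega) hC hBB
  have hGe : Module.finrank (ZMod 2) V - t₀ = Module.finrank (ZMod 2) G := by omega
  rw [hGe] at hN hM
  refine endgame h1 h2 M h0 G hG ?_ ?_
  · have h3 : 2 ^ (t + 2) ≤ 2 ^ Module.finrank (ZMod 2) G :=
      Nat.pow_le_pow_right (by norm_num) (by omega)
    rw [pow_add] at h3
    rw [hN] at hsm
    have h4 : 2 ^ t₀ * (8 * 2 ^ t₀ * (Mᶜ.filter (fun x => x ∉ G)).card)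
        ≤ 2 ^ t₀ * 2 ^ Module.finrank (ZMod 2) G := by
      refine le_trans (le_of_eq ?_) hsm; ring
    have h5 := Nat.le_of_mul_le_mul_left h4 (by omega)
    have h6 : 8 * 2 ^ t₀ * (Mᶜ.filter (fun x => x ∉ G)).card
      = 2 * (4 * 2 ^ t₀ * (Mᶜ.filter (fun x => x ∉ G)).card) := by ring
    have h7 : 1 ≤ 2 ^ t := Nat.one_le_two_pow
    omega
  · have h3 := card_filter_sub G
    have h4 : (Finset.univ.filter (fun x => x ∈ G)) ⊆ M.filter (fun x => x ∈ G) ∪ Mᶜ := by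
      intro x hx
      by_cases hxM : x ∈ M <;> simp_all
    have h5 := (Finset.card_le_card h4).trans (Finset.card_union_le _ _)
    omega

theorem lower_free {t t₀ : ℕ} (h1 : 2 ^ t₀ < t) {V : Type}
    [AddCommGroup V] [Module (ZMod 2) V] [Fintype V] (G D : Submodule (ZMod 2) V)
    (hG : Module.finrank (ZMod 2) G + t₀ = Module.finrank (ZMod 2) V)
    (hD : Module.finrank (ZMod 2) D = t - 2 ^ t₀ - 1) (M : Set V)
    (hM : ∀ x ∈ M, x ∈ G → x ∈ D) :
    ¬ HasRestriction (cycleMatroid (⊤ : SimpleGraph (Fin t))) M := by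
  rintro ⟨ψ, hψ, hψM⟩
  have : Fintype (V ⧸ G) := Fintype.ofFinite _
  have hQ : Fintype.card (V ⧸ G) = 2 ^ t₀ := by
    rw [aux_card]
    have := Submodule.finrank_quotient_add_finrank G
    congr 1; omega
  have : Nonempty (Fin t) := ⟨⟨0, by omega⟩⟩
  let f : Fin t → V ⧸ G := fun i => G.mkQ (ψ (Pi.single i 1))
  let rep : Fin t → Fin t := fun i => Function.invFun f (f i)
  have hrep : ∀ i, f (rep i) = f i := fun i => Function.invFun_eq ⟨i, rfl⟩
  let S : Finset (Fin t) := Finset.univ.image (Function.invFun f)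
  have hS : S.card ≤ 2 ^ t₀ := by
    rw [← hQ, ← Finset.card_univ]; exact Finset.card_image_le
  have hrepS : ∀ i, rep i ∈ S := fun i => Finset.mem_image_of_mem _ (Finset.mem_univ _)
  let I := {i : Fin t // i ∉ S}
  let w : I → (Fin t → ZMod 2) := fun i => Pi.single (i : Fin t) 1 + Pi.single (rep i) 1
  have hw : LinearIndependent (ZMod 2) w := by
    rw [Fintype.linearIndependent_iff]
    intro c hc i
    have h := congrFun hc (i : Fin t)
    rw [Finset.sum_apply, Finset.sum_eq_single i] at h
    · have hne : (i : Fin t) ≠ rep i := fun h => i.2 (h ▸ hrepS i)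
      simpa [w, hne] using h
    · intro j _ hj
      have hne : (i : Fin t) ≠ rep j := fun h => i.2 (h ▸ hrepS j)
      have hne2 : (i : Fin t) ≠ j := fun h => hj (Subtype.ext h.symm)
      simp [w, hne, hne2]
    · simp
  have hw' : LinearIndependent (ZMod 2) (ψ ∘ w) := hw.map' ψ (LinearMap.ker_eq_bot.2 hψ)
  have hsp : Submodule.span (ZMod 2) (Set.range (ψ ∘ w)) ≤ D := by
    rw [Submodule.span_le]
    rintro _ ⟨i, rfl⟩
    have hne : (i : Fin t) ≠ rep i := fun h => i.2 (h ▸ hrepS i)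
    refine hM _ (hψM ⟨_, ⟨(i : Fin t), rep i, ?_, rfl⟩, rfl⟩) ?_
    · simpa using hne
    · refine (Submodule.Quotient.mk_eq_zero G).1 ?_
      change G.mkQ (ψ (w i)) = 0
      have : G.mkQ (ψ (w i)) = f i + f (rep i) := by simp only [w, f, map_add]
      rw [this, hrep, aux_self]
  have h3 := Submodule.finrank_mono hsp
  rw [finrank_span_eq_card hw', hD] at h3
  have h4 : Fintype.card I = t - S.card := by
    rw [Fintype.card_subtype_compl]; simp
  omega

/-- Exact Turán numbers for cycle matroids of complete graphs. -/
theorem clique_exact (t t₀ : ℕ) (ht : 2 ≤ t) (ht₀1 : 2 ^ t₀ < t) (ht₀2 : t ≤ 2 ^ (t₀ + 1)) :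
    ∃ n₀ : ℕ, ∀ n ≥ n₀,
      exNum (cycleMatroid (⊤ : SimpleGraph (Fin t))) n
        = 2 ^ n - 2 ^ (n - t₀) + 2 ^ (t - 2 ^ t₀ - 1) - 1 := by
  obtain ⟨d, hd⟩ := upper t t₀ ht₀1 ht₀2
  refine ⟨d + t + t₀, fun n hn => ?_⟩
  have hfr : Module.finrank (ZMod 2) (Fin n → ZMod 2) = n := by simp
  have hcard : Fintype.card (Fin n → ZMod 2) = 2 ^ n := by rw [aux_card, hfr]
  have hle : 2 ^ (n - t₀) ≤ 2 ^ n := Nat.pow_le_pow_right (by norm_num) (by omega)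
  have hs1 : 1 ≤ 2 ^ (t - 2 ^ t₀ - 1) := Nat.one_le_two_pow
  unfold exNum
  refine IsGreatest.csSup_eq ⟨?_, ?_⟩
  · obtain ⟨G, -, hG⟩ := exists_sub (⊤ : Submodule (ZMod 2) (Fin n → ZMod 2)) (n - t₀)
      (by rw [finrank_top, hfr]; omega)
    obtain ⟨D, hDG, hD⟩ := exists_sub G (t - 2 ^ t₀ - 1) (by rw [hG]; omega)
    let M : Finset (Fin n → ZMod 2) := (Finset.univ.filter (fun x => x ∈ G))ᶜ ∪
      (Finset.univ.filter (fun x => x ∈ D)).erase 0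
    have hMm : ∀ x, x ∈ M ↔ x ∉ G ∨ (x ≠ 0 ∧ x ∈ D) := by
      intro x; simp [M]
    refine ⟨(M : Set (Fin n → ZMod 2)), ?_, ?_, ?_⟩
    · rw [Finset.mem_coe, hMm]; simp
    · refine lower_free (t₀ := t₀) ht₀1 G D (by omega) hD _ ?_
      intro x hx hxG
      rw [Finset.mem_coe, hMm] at hx
      rcases hx with h | h
      · exact absurd hxG h
      · exact h.2
    · rw [Set.ncard_coe_finset, Finset.card_union_of_disjoint, Finset.card_compl,
        Finset.card_erase_of_mem (by simp), card_filter_sub, card_filter_sub, hcard, hG, hD]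
      · omega
      · rw [Finset.disjoint_left]
        intro x hx hx'
        simp only [Finset.mem_compl, Finset.mem_filter, Finset.mem_univ, true_and,
          Finset.mem_erase] at hx hx'
        exact hx (hDG hx'.2)
  · rintro m ⟨M, h0, hfree, rfl⟩
    by_contra! hcon
    apply hfree
    have hMe : ((M.toFinset : Finset (Fin n → ZMod 2)) : Set (Fin n → ZMod 2)) = M := by simp
    rw [← hMe]
    have hnc : M.ncard = M.toFinset.card := Set.ncard_eq_toFinset_card' M
    refine hd _ M.toFinset (by simpa using h0) (by rw [hfr]; omega) ?_
    rw [hnc] at hcon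
    rw [hfr]
    omega
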